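/- There exists σ > 0, depending only on N, p and κ, such that in the sequence setup described in the context, defining for each index set I ⊆ {1,…,N} the sets A_n(I) = (⋂_{i ∈ I} {x ∈ Ω : f_{in}(x) > σ}) ∩ (⋂_{j ∉ I} {x ∈ Ω : |f_{jn}(x)| < σ/2}), one has Σ_{I ⊆ {1,…,N}} |A_n(I)| → |Ω| as n → ∞. -/

import Mathlib

/-!
Write `f = m - A u`, `g = ∑ i, |f i| ^ p` and `h = ∑ i, u i * |f i| ^ p`. For an index set `J`, let
`B` have the rows of `A` on `J` and the rows of the identity off `J`. Then `det B = Δ_J ≥ κ`, so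
`B` has an inverse bounded in terms of `N` and `κ`: a vector `w` is controlled by the entries of
`A w` on `J` together with its own entries off `J`. This gives two pointwise estimates.

* With `J = {1 ≤ u}`, `h` controls `f` on `J`, hence all of `u` and of `f`, so `g ≤ C (1 + h)`.
* Let `z` vanish off `J` and solve `A z = m` on `J`. A Schur complement shows
  `Δ_{J,j} = Δ_J * (m - A z) j`, so `(m - A z) j ≥ κ / Δ_J` off `J`. If `h` is small, then with
  `J = {η ≤ u}` the vector `u` is close to `z`, so `f` is small on `J` and bounded below off `J`:
  the point lies in `A_n(Jᶜ)`. Hence `h ≥ c > 0` off the union of the sets `A_n(I)`.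

Integrating the first estimate and absorbing `∫ g` shows that `∫ g` is bounded, so `∫ h → 0`; by the
second, the measure of the points in no `A_n(I)` tends to zero. The sets `A_n(I)` are disjoint.
-/

open MeasureTheory Filter

/-- Principal minor of `A` over the index set `I`. -/
noncomputable def minorP {N : ℕ} (A : Matrix (Fin N) (Fin N) ℝ) (I : Finset (Fin N)) : ℝ :=
  Matrix.det (Matrix.of fun i j : {x : Fin N // x ∈ I} => A i.1 j.1)

/-- The determinant `Δ_{I,j}` obtained by bordering the principal minor over `I`
with the column `m` and the row `j`. -/
noncomputable def minorM {N : ℕ} (A : Matrix (Fin N) (Fin N) ℝ) (m : Fin N → ℝ)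
    (I : Finset (Fin N)) (j : Fin N) : ℝ :=
  Matrix.det (Matrix.of fun k l : Option {x : Fin N // x ∈ I} =>
    match k, l with
    | some k', some l' => A k'.1 l'.1
    | some k', none => m k'.1
    | none, some l' => A j l'.1
    | none, none => m j)

/-- An admissible pair of coefficients with constant `κ`:
entries of `A` and `m` bounded by `1/κ`, all principal minors `Δ_I ≥ κ`,
and all bordered determinants `Δ_{I,j} ≥ κ` for `j ∉ I`. -/
def IsAdmissible {N : ℕ} (κ : ℝ) (A : Matrix (Fin N) (Fin N) ℝ) (m : Fin N → ℝ) : Prop :=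
  (∀ i j, |A i j| ≤ 1 / κ) ∧ (∀ i, m i ≤ 1 / κ) ∧
    (∀ I : Finset (Fin N), κ ≤ minorP A I) ∧
    (∀ I : Finset (Fin N), ∀ j ∉ I, κ ≤ minorM A m I j)

/-- `f_i(u) = m_i − Σ_j a_{ij} u_j`. -/
def fComp {N : ℕ} (A : Matrix (Fin N) (Fin N) ℝ) (m : Fin N → ℝ) (u : Fin N → ℝ)
    (i : Fin N) : ℝ :=
  m i - ∑ j, A i j * u j

/-- Pointwise `f_{i}(x) = m_i(x) − Σ_j a_{ij}(x) u_j(x)` for coefficient fields on `ℝ^d`. -/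
noncomputable def fSeq {d N : ℕ} (A : (Fin d → ℝ) → Matrix (Fin N) (Fin N) ℝ)
    (m : (Fin d → ℝ) → Fin N → ℝ) (u : (Fin d → ℝ) → Fin N → ℝ)
    (x : Fin d → ℝ) (i : Fin N) : ℝ :=
  m x i - ∑ j, A x i j * u x j

/-- Pointwise `g(x) = Σ_i |f_i(x)|^p`. -/
noncomputable def gSeq {d N : ℕ} (A : (Fin d → ℝ) → Matrix (Fin N) (Fin N) ℝ)
    (m : (Fin d → ℝ) → Fin N → ℝ) (u : (Fin d → ℝ) → Fin N → ℝ)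
    (p : ℝ) (x : Fin d → ℝ) : ℝ :=
  ∑ i, |fSeq A m u x i| ^ p

/-- Pointwise `v(x) = g(x)⁻¹ Σ_i u_i(x) |f_i(x)|^p` when `g(x) ≠ 0`, and
`v(x) = min_i u_i(x)` when `g(x) = 0`. -/
noncomputable def vSeq {d N : ℕ} (A : (Fin d → ℝ) → Matrix (Fin N) (Fin N) ℝ)
    (m : (Fin d → ℝ) → Fin N → ℝ) (u : (Fin d → ℝ) → Fin N → ℝ)
    (p : ℝ) (x : Fin d → ℝ) : ℝ :=
  if gSeq A m u p x = 0 then ⨅ i, u x i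
  else (∑ i, u x i * |fSeq A m u x i| ^ p) / gSeq A m u p x

open scoped ENNReal Topology

/-! ### Quantitative linear algebra -/

section MatrixBounds

variable {n : Type*} [Fintype n]

lemma abs_mulVec_le {m : Type*} {A : Matrix m n ℝ} {b t : ℝ} (hb : 0 ≤ b)
    (hA : ∀ i j, |A i j| ≤ b) {w : n → ℝ} (hw : ∀ j, |w j| ≤ t) (i : m) :
    |(A.mulVec w) i| ≤ Fintype.card n * (b * t) :=
  calc |∑ j, A i j * w j| ≤ ∑ j, |A i j * w j| := Finset.abs_sum_le_sum_abs _ _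
    _ ≤ ∑ _j : n, b * t := by
        refine Finset.sum_le_sum fun j _ => ?_
        rw [abs_mul]
        exact mul_le_mul (hA i j) (hw j) (abs_nonneg _) hb
    _ = Fintype.card n * (b * t) := by
        rw [Finset.sum_const, Finset.card_univ, nsmul_eq_mul]

variable [DecidableEq n]

lemma abs_det_le {A : Matrix n n ℝ} {b : ℝ} (hA : ∀ i j, |A i j| ≤ b) :
    |A.det| ≤ (Fintype.card n).factorial * b ^ Fintype.card n := by
  rw [← nsmul_eq_mul]
  exact Matrix.det_le (abv := AbsoluteValue.abs) hA

lemma abs_adjugate_le {A : Matrix n n ℝ} {b : ℝ} (hb : 1 ≤ b) (hA : ∀ i j, |A i j| ≤ b)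
    (i j : n) : |A.adjugate i j| ≤ (Fintype.card n).factorial * b ^ Fintype.card n := by
  rw [Matrix.adjugate_apply]
  refine abs_det_le fun k l => ?_
  rcases eq_or_ne k j with rfl | hk
  · rw [Matrix.updateRow_self]
    rcases eq_or_ne l i with rfl | hl
    · simpa only [Pi.single_eq_same, abs_one] using hb
    · simpa only [Pi.single_eq_of_ne hl, abs_zero] using zero_le_one.trans hb
  · simpa only [Matrix.updateRow_ne hk] using hA k l

lemma abs_le_of_abs_mulVec_le {A : Matrix n n ℝ} {b κ t : ℝ} (hb : 1 ≤ b)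
    (hA : ∀ i j, |A i j| ≤ b) (hκ : 0 < κ) (hdet : κ ≤ |A.det|) {w : n → ℝ}
    (hw : ∀ i, |(A.mulVec w) i| ≤ t) (i : n) :
    |w i| ≤ Fintype.card n * ((Fintype.card n).factorial * b ^ Fintype.card n) / κ * t := by
  have cramer : A.det * w i = (A.adjugate.mulVec (A.mulVec w)) i := by
    rw [Matrix.mulVec_mulVec, Matrix.adjugate_mul, Matrix.smul_mulVec, Matrix.one_mulVec,
      Pi.smul_apply, smul_eq_mul]
  have hdetw : |A.det| * |w i| ≤
      Fintype.card n * ((Fintype.card n).factorial * b ^ Fintype.card n * t) := by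
    rw [← abs_mul, cramer]
    exact abs_mulVec_le (by positivity) (abs_adjugate_le hb hA) hw i
  have hκw : κ * |w i| ≤ |A.det| * |w i| := by gcongr
  rw [div_mul_eq_mul_div, le_div_iff₀ hκ]
  linarith

lemma det_fromBlocks_mul_right {m R : Type*} [CommRing R] [Fintype m] [DecidableEq m]
    (A : Matrix m m R) (U : Matrix m n R) (C : Matrix n m R) (D : Matrix n n R) :
    (Matrix.fromBlocks A (A * U) C D).det = A.det * (D - C * U).det := by
  have factorization : Matrix.fromBlocks A (A * U) C D =
      Matrix.fromBlocks A 0 C (D - C * U) * Matrix.fromBlocks 1 U 0 1 := by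
    simp [Matrix.fromBlocks_multiply]
  rw [factorization, Matrix.det_mul, Matrix.det_fromBlocks_zero₁₂, Matrix.det_fromBlocks_zero₂₁,
    Matrix.det_one, Matrix.det_one, mul_one, mul_one]

end MatrixBounds

section ComplementaryMatrix

variable {n : Type*} [DecidableEq n]

/-- The complementary matrix of linear complementarity theory: the rows of `A` on `J` and those
of the identity off `J`. A vector is sent to its image under `A` on `J` and to itself off `J`. -/
def complementaryMatrix (A : Matrix n n ℝ) (J : Finset n) : Matrix n n ℝ :=
  Matrix.of fun i => if i ∈ J then A i else (1 : Matrix n n ℝ) i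

lemma abs_complementaryMatrix_le {A : Matrix n n ℝ} {b : ℝ} (hb : 1 ≤ b)
    (hA : ∀ i j, |A i j| ≤ b) (J : Finset n) (i j : n) : |complementaryMatrix A J i j| ≤ b := by
  simp only [complementaryMatrix, Matrix.of_apply]
  split_ifs
  · exact hA i j
  · rw [Matrix.one_apply]
    split_ifs <;> simp <;> linarith

lemma complementaryMatrix_mulVec [Fintype n] (A : Matrix n n ℝ) (J : Finset n) (w : n → ℝ) (i : n) :
    ((complementaryMatrix A J).mulVec w) i = if i ∈ J then (A.mulVec w) i else w i := by
  split_ifs with hi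
  · simp only [complementaryMatrix, Matrix.mulVec, Matrix.of_apply, if_pos hi]
  · simpa only [complementaryMatrix, Matrix.mulVec, Matrix.of_apply, if_neg hi] using
      congrFun (Matrix.one_mulVec w) i

end ComplementaryMatrix

/-! ### Complementary solutions -/

section Complementarity

variable {N : ℕ}

lemma det_complementaryMatrix (A : Matrix (Fin N) (Fin N) ℝ) (J : Finset (Fin N)) :
    (complementaryMatrix A J).det = minorP A J := by
  have hone : (complementaryMatrix A J).toSquareBlockProp (fun i => i ∉ J) = 1 := by
    ext i j
    simp [complementaryMatrix, Matrix.toSquareBlockProp, i.2, Matrix.one_apply, Subtype.ext_iff]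
  have hminor : (complementaryMatrix A J).toSquareBlockProp (fun i => i ∈ J) =
      Matrix.of fun i j : {x : Fin N // x ∈ J} => A i.1 j.1 := by
    ext i j
    simp [complementaryMatrix, Matrix.toSquareBlockProp, i.2]
  have htriangular : ∀ i, i ∉ J → ∀ j, j ∈ J → complementaryMatrix A J i j = 0 := by
    intro i hi j hj
    have hij : i ≠ j := fun h => hi (h ▸ hj)
    simp [complementaryMatrix, hi, hij]
  rw [Matrix.twoBlockTriangular_det _ (fun i => i ∈ J) htriangular, hone, hminor, Matrix.det_one,
    mul_one, minorP]
  congr!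

lemma fComp_eq_sub_mulVec (A : Matrix (Fin N) (Fin N) ℝ) (m u : Fin N → ℝ) (i : Fin N) :
    fComp A m u i = m i - (A.mulVec u) i := rfl

lemma exists_fComp_eq_zero_on {A : Matrix (Fin N) (Fin N) ℝ} {J : Finset (Fin N)}
    (hJ : minorP A J ≠ 0) (m : Fin N → ℝ) :
    ∃ z : Fin N → ℝ, (∀ i ∉ J, z i = 0) ∧ ∀ i ∈ J, fComp A m z i = 0 := by
  have hunit : IsUnit (complementaryMatrix A J) := by
    rw [Matrix.isUnit_iff_isUnit_det, det_complementaryMatrix]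
    exact hJ.isUnit
  obtain ⟨z, hz⟩ := Matrix.mulVec_surjective_iff_isUnit.2 hunit fun i => if i ∈ J then m i else 0
  have hz' := fun i => (complementaryMatrix_mulVec A J z i).symm.trans (congrFun hz i)
  refine ⟨z, fun i hi => ?_, fun i hi => ?_⟩
  · simpa only [if_neg hi] using hz' i
  · rw [fComp_eq_sub_mulVec, sub_eq_zero]
    simpa only [if_pos hi] using (hz' i).symm

lemma minorM_eq_minorP_mul_fComp {A : Matrix (Fin N) (Fin N) ℝ} {m z : Fin N → ℝ}
    {J : Finset (Fin N)} (hz : ∀ i ∉ J, z i = 0) (hf : ∀ i ∈ J, fComp A m z i = 0) (j : Fin N) :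
    minorM A m J j = minorP A J * fComp A m z j := by
  have hsum (i : Fin N) : ∑ l, A i l * z l = ∑ l : {x // x ∈ J}, A i l.1 * z l.1 := by
    rw [Finset.sum_coe_sort J fun l => A i l * z l]
    exact (Finset.sum_subset J.subset_univ fun l _ hl => by rw [hz l hl, mul_zero]).symm
  let P : Matrix {x // x ∈ J} {x // x ∈ J} ℝ := Matrix.of fun k l => A k.1 l.1
  let U : Matrix {x // x ∈ J} Unit ℝ := Matrix.of fun k _ => z k.1
  let r : Matrix Unit {x // x ∈ J} ℝ := Matrix.of fun _ l => A j l.1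
  let c : Matrix Unit Unit ℝ := Matrix.of fun _ _ => m j
  have hm (k : {x // x ∈ J}) : m k.1 = ∑ l : {x // x ∈ J}, A k.1 l.1 * z l.1 := by
    rw [← hsum]
    exact sub_eq_zero.1 (hf k.1 k.2)
  have hblocks : minorM A m J j = (Matrix.fromBlocks P (P * U) r c).det := by
    rw [← Matrix.det_submatrix_equiv_self (Equiv.optionEquivSumPUnit.{0} {x // x ∈ J}), minorM]
    congr 1
    ext k l
    rcases k with _ | k <;> rcases l with _ | l <;> simp [P, U, r, c, Matrix.mul_apply, hm]
  have hschur : (c - r * U).det = fComp A m z j := by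
    simp [c, r, U, Matrix.mul_apply, fComp, hsum]
  rw [hblocks, det_fromBlocks_mul_right, hschur]
  rfl

end Complementarity

/-! ### Bounds for admissible pairs -/

/-- Upper bound, from the Leibniz expansion, for the principal minors of an `N × N` matrix
admissible with constant `κ`. -/
noncomputable def minorBound (N : ℕ) (κ : ℝ) : ℝ := N.factorial * (1 / κ) ^ N

/-- Sup-norm bound for the inverses of the complementary matrices of an `N × N` matrix admissible
with constant `κ`. -/
noncomputable def inverseBound (N : ℕ) (κ : ℝ) : ℝ := N * minorBound N κ / κ

section Admissible

variable {N : ℕ} {κ : ℝ} {A : Matrix (Fin N) (Fin N) ℝ} {m u : Fin N → ℝ}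

lemma minorBound_pos (N : ℕ) (hκ : 0 < κ) : 0 < minorBound N κ := by
  unfold minorBound
  positivity

lemma inverseBound_nonneg (N : ℕ) (hκ : 0 < κ) : 0 ≤ inverseBound N κ := by
  have := minorBound_pos N hκ
  unfold inverseBound
  positivity

lemma IsAdmissible.one_le_one_div (h : IsAdmissible κ A m) (hκ : 0 < κ) : 1 ≤ 1 / κ := by
  rw [one_le_div hκ]
  simpa [minorP] using h.2.2.1 ∅

lemma IsAdmissible.le_m (h : IsAdmissible κ A m) (i : Fin N) : κ ≤ m i := by
  have hbordered := h.2.2.2 ∅ i (Finset.notMem_empty i)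
  rw [minorM_eq_minorP_mul_fComp (z := 0) (by simp) (by simp)] at hbordered
  simpa [minorP, fComp] using hbordered

lemma IsAdmissible.minorP_le (h : IsAdmissible κ A m) (hκ : 0 < κ) (J : Finset (Fin N)) :
    minorP A J ≤ minorBound N κ := by
  rw [← det_complementaryMatrix]
  refine (le_abs_self _).trans ?_
  simpa only [minorBound, Fintype.card_fin] using
    abs_det_le (abs_complementaryMatrix_le (h.one_le_one_div hκ) h.1 J)

lemma IsAdmissible.abs_le_inverseBound_mul (h : IsAdmissible κ A m) (hκ : 0 < κ)
    {J : Finset (Fin N)} {w : Fin N → ℝ} {t : ℝ} (hon : ∀ i ∈ J, |(A.mulVec w) i| ≤ t)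
    (hoff : ∀ i ∉ J, |w i| ≤ t) (i : Fin N) : |w i| ≤ inverseBound N κ * t := by
  have hb := h.one_le_one_div hκ
  have hdet : κ ≤ |(complementaryMatrix A J).det| :=
    (det_complementaryMatrix A J ▸ h.2.2.1 J).trans (le_abs_self _)
  have himage (i : Fin N) : |((complementaryMatrix A J).mulVec w) i| ≤ t := by
    rw [complementaryMatrix_mulVec]
    split_ifs with hi
    exacts [hon i hi, hoff i hi]
  simpa only [inverseBound, minorBound, Fintype.card_fin] using
    abs_le_of_abs_mulVec_le hb (abs_complementaryMatrix_le hb h.1 J) hκ hdet himage i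

lemma IsAdmissible.abs_fComp_le (h : IsAdmissible κ A m) (hκ : 0 < κ) {t : ℝ} (ht : 0 ≤ t)
    (hu : ∀ i, 0 ≤ u i) (hf : ∀ i, 1 ≤ u i → |fComp A m u i| ≤ t) (i : Fin N) :
    |fComp A m u i| ≤ 1 / κ * (1 + N * (1 / κ) * inverseBound N κ) * (1 + t) := by
  have hb := h.one_le_one_div hκ
  have hm (i : Fin N) : |m i| ≤ 1 / κ := by
    rw [abs_of_pos (hκ.trans_le (h.le_m i))]
    exact h.2.1 i
  have hu_le (j : Fin N) : |u j| ≤ inverseBound N κ * (1 / κ + t) := by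
    refine h.abs_le_inverseBound_mul hκ (J := {j | 1 ≤ u j}) (fun j hj => ?_) (fun j hj => ?_) j
    · have hAu : (A.mulVec u) j = m j - fComp A m u j := by rw [fComp_eq_sub_mulVec, sub_sub_cancel]
      rw [hAu]
      exact (abs_sub _ _).trans (add_le_add (hm j) (hf j (by simpa using hj)))
    · rw [abs_of_nonneg (hu j)]
      have : u j < 1 := by simpa using hj
      linarith
  have hscale : 1 / κ + t ≤ 1 / κ * (1 + t) := by nlinarith
  have hK := inverseBound_nonneg N hκ
  have hAu_le := abs_mulVec_le (by positivity) h.1 hu_le i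
  rw [Fintype.card_fin] at hAu_le
  calc |fComp A m u i| ≤ |m i| + |(A.mulVec u) i| := abs_sub _ _
    _ ≤ 1 / κ * (1 + t) + N * (1 / κ * (inverseBound N κ * (1 / κ * (1 + t)))) := by
        refine add_le_add ((hm i).trans (by linarith)) (hAu_le.trans ?_)
        gcongr
    _ = 1 / κ * (1 + N * (1 / κ) * inverseBound N κ) * (1 + t) := by ring

lemma IsAdmissible.exists_complementary_solution (h : IsAdmissible κ A m) (hκ : 0 < κ)
    (J : Finset (Fin N)) :
    ∃ z : Fin N → ℝ, (∀ i ∉ J, z i = 0) ∧ (∀ i ∈ J, fComp A m z i = 0) ∧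
      ∀ j ∉ J, κ / minorBound N κ ≤ fComp A m z j := by
  have hJ : 0 < minorP A J := hκ.trans_le (h.2.2.1 J)
  obtain ⟨z, hz, hf⟩ := exists_fComp_eq_zero_on hJ.ne' m
  refine ⟨z, hz, hf, fun j hj => ?_⟩
  have hΔ : κ ≤ minorP A J * fComp A m z j :=
    minorM_eq_minorP_mul_fComp hz hf j ▸ h.2.2.2 J j hj
  have hfj : 0 < fComp A m z j := pos_of_mul_pos_right (hκ.trans_le hΔ) hJ.le
  rw [div_le_iff₀' (minorBound_pos N hκ)]
  exact hΔ.trans (by gcongr; exact h.minorP_le hκ J)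

-- If `z` is the complementary solution on `J`, then `A (u - z)` is `-f` on `J`, while `u - z` is
-- `u` off `J`; so `u - z` is of order `η`.
lemma IsAdmissible.le_fComp_of_almost_complementary (h : IsAdmissible κ A m) (hκ : 0 < κ)
    {J : Finset (Fin N)} {η : ℝ} (hf : ∀ i ∈ J, |fComp A m u i| ≤ η) (hu : ∀ i ∉ J, |u i| ≤ η)
    {j : Fin N} (hj : j ∉ J) :
    κ / minorBound N κ - N * (1 / κ) * inverseBound N κ * η ≤ fComp A m u j := by
  obtain ⟨z, hz, hfz, hfzj⟩ := h.exists_complementary_solution hκ J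
  have hA_sub (i : Fin N) : (A.mulVec (u - z)) i = fComp A m z i - fComp A m u i := by
    simp only [fComp_eq_sub_mulVec, Matrix.mulVec_sub, Pi.sub_apply]
    ring
  have hsub : ∀ i, |(u - z) i| ≤ inverseBound N κ * η := by
    refine h.abs_le_inverseBound_mul hκ (J := J) (fun i hi => ?_) (fun i hi => ?_)
    · rw [hA_sub, hfz i hi, zero_sub, abs_neg]
      exact hf i hi
    · rw [Pi.sub_apply, hz i hi, sub_zero]
      exact hu i hi
  have hAj := (le_abs_self _).trans (abs_mulVec_le (by positivity) h.1 hsub j)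
  rw [hA_sub, Fintype.card_fin] at hAj
  linarith [hfzj j hj]

end Admissible

/-! ### Pointwise estimates -/

/-- The vector `f` has a gap at level `σ` with upper part `I`: its entries exceed `σ` on `I` and
are smaller than `σ / 2` in absolute value off `I`. The set `A_n(I)` consists of the points at which
`f_n` has this property. -/
def SplitsAt {ι : Type*} (σ : ℝ) (f : ι → ℝ) (I : Finset ι) : Prop :=
  (∀ i ∈ I, σ < f i) ∧ ∀ j ∉ I, |f j| < σ / 2

/-- The level `σ` at which `f` splits. It is half of a lower bound for the entries of `f` off the
support of `u` when `f` vanishes on that support. -/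
noncomputable def splitLevel (N : ℕ) (κ : ℝ) : ℝ := κ / minorBound N κ / 2

lemma splitLevel_pos (N : ℕ) {κ : ℝ} (hκ : 0 < κ) : 0 < splitLevel N κ := by
  have := minorBound_pos N hκ
  unfold splitLevel
  positivity

lemma SplitsAt.subset {ι : Type*} {σ : ℝ} {f : ι → ℝ} {I I' : Finset ι} (h : SplitsAt σ f I)
    (h' : SplitsAt σ f I') : I ⊆ I' := by
  intro i hi
  by_contra hi'
  linarith [h.1 i hi, h'.2 i hi', le_abs_self (f i), abs_nonneg (f i)]

lemma SplitsAt.unique {ι : Type*} {σ : ℝ} {f : ι → ℝ} {I I' : Finset ι} (h : SplitsAt σ f I)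
    (h' : SplitsAt σ f I') : I = I' :=
  (h.subset h').antisymm (h'.subset h)

lemma measurableSet_splitsAt {ι : Type*} [Finite ι] (σ : ℝ) (I : Finset ι) :
    MeasurableSet {f : ι → ℝ | SplitsAt σ f I} := by
  unfold SplitsAt
  measurability

lemma iInter_inter_iInter_eq_splitsAt {X ι : Type*} [Fintype ι] [DecidableEq ι] [Nonempty ι]
    (Ω : Set X) (f : X → ι → ℝ) (σ : ℝ) (I : Finset ι) :
    (⋂ i ∈ I, {x ∈ Ω | σ < f x i}) ∩ ⋂ j ∈ Iᶜ, {x ∈ Ω | |f x j| < σ / 2} =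
      {x | SplitsAt σ (f x) I} ∩ Ω := by
  ext x
  simp only [SplitsAt, Set.mem_inter_iff, Set.mem_iInter, Set.mem_ofPred_eq, Finset.mem_compl]
  constructor
  · rintro ⟨hI, hIc⟩
    refine ⟨⟨fun i hi => (hI i hi).2, fun j hj => (hIc j hj).2⟩, ?_⟩
    obtain ⟨i⟩ := ‹Nonempty ι›
    by_cases hi : i ∈ I
    exacts [(hI i hi).1, (hIc i hi).1]
  · rintro ⟨⟨hI, hIc⟩, hx⟩
    exact ⟨fun i hi => ⟨hx, hI i hi⟩, fun j hj => ⟨hx, hIc j hj⟩⟩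

lemma mul_abs_rpow_le_sum {ι : Type*} [Fintype ι] {u f : ι → ℝ} (hu : ∀ i, 0 ≤ u i) (p : ℝ)
    {η : ℝ} {i : ι} (hi : η ≤ u i) : η * |f i| ^ p ≤ ∑ j, u j * |f j| ^ p :=
  calc η * |f i| ^ p ≤ u i * |f i| ^ p := by gcongr
    _ ≤ ∑ j, u j * |f j| ^ p :=
      Finset.single_le_sum (f := fun j => u j * |f j| ^ p)
        (fun j _ => mul_nonneg (hu j) (by positivity)) (Finset.mem_univ i)

lemma add_rpow_le_two_rpow_mul {a b p : ℝ} (ha : 0 ≤ a) (hb : 0 ≤ b) (hp : 0 ≤ p) :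
    (a + b) ^ p ≤ 2 ^ p * (a ^ p + b ^ p) := by
  wlog hab : a ≤ b generalizing a b
  · rw [add_comm a b, add_comm (a ^ p)]
    exact this hb ha (le_of_not_ge hab)
  calc (a + b) ^ p ≤ (2 * b) ^ p := by gcongr; linarith
    _ = 2 ^ p * b ^ p := Real.mul_rpow zero_le_two hb
    _ ≤ 2 ^ p * (a ^ p + b ^ p) := by gcongr; exact le_add_of_nonneg_left (by positivity)

-- The weighted sum controls `f` where `1 ≤ u`, and the bound on complementary matrices
-- transfers this control to the remaining entries.
lemma exists_sum_abs_rpow_le (N : ℕ) {κ p : ℝ} (hκ : 0 < κ) (hp : 0 < p) :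
    ∃ C : ℝ, 0 ≤ C ∧ ∀ (A : Matrix (Fin N) (Fin N) ℝ) (m u : Fin N → ℝ), IsAdmissible κ A m →
      (∀ i, 0 ≤ u i) →
        ∑ i, |fComp A m u i| ^ p ≤ C * (1 + ∑ i, u i * |fComp A m u i| ^ p) := by
  let L := 1 / κ * (1 + N * (1 / κ) * inverseBound N κ)
  have hL : 0 ≤ L := by
    have := inverseBound_nonneg N hκ
    positivity
  refine ⟨N * (L ^ p * 2 ^ p), by positivity, fun A m u h hu => ?_⟩
  set H := ∑ i, u i * |fComp A m u i| ^ p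
  have hH : 0 ≤ H := Finset.sum_nonneg fun i _ => mul_nonneg (hu i) (by positivity)
  have hf (i : Fin N) (hi : 1 ≤ u i) : |fComp A m u i| ≤ H ^ p⁻¹ := by
    rw [Real.le_rpow_inv_iff_of_pos (abs_nonneg _) hH hp]
    simpa only [one_mul] using mul_abs_rpow_le_sum hu p hi
  have hterm (i : Fin N) : |fComp A m u i| ^ p ≤ L ^ p * 2 ^ p * (1 + H) :=
    calc |fComp A m u i| ^ p ≤ (L * (1 + H ^ p⁻¹)) ^ p := by
          gcongr
          exact h.abs_fComp_le hκ (by positivity) hu hf i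
      _ = L ^ p * (1 + H ^ p⁻¹) ^ p := Real.mul_rpow hL (by positivity)
      _ ≤ L ^ p * (2 ^ p * (1 ^ p + (H ^ p⁻¹) ^ p)) := by
          gcongr
          exact add_rpow_le_two_rpow_mul zero_le_one (by positivity) hp.le
      _ = L ^ p * 2 ^ p * (1 + H) := by
          rw [Real.one_rpow, Real.rpow_inv_rpow hH hp.ne', mul_assoc]
  refine (Finset.sum_le_card_nsmul _ _ _ fun i _ => hterm i).trans_eq ?_
  rw [Finset.card_univ, Fintype.card_fin, nsmul_eq_mul, ← mul_assoc]

lemma IsAdmissible.splitsAt_compl {N : ℕ} {κ η : ℝ} {A : Matrix (Fin N) (Fin N) ℝ}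
    {m u : Fin N → ℝ} (h : IsAdmissible κ A m) (hκ : 0 < κ)
    (hη : η < splitLevel N κ / 2) (hη' : N * (1 / κ) * inverseBound N κ * η < splitLevel N κ)
    {J : Finset (Fin N)} (hf : ∀ i ∈ J, |fComp A m u i| ≤ η) (hu : ∀ i ∉ J, |u i| ≤ η) :
    SplitsAt (splitLevel N κ) (fComp A m u) Jᶜ := by
  refine ⟨fun j hj => ?_, fun i hi => (hf i (by simpa using hi)).trans_lt hη⟩
  have hfj := h.le_fComp_of_almost_complementary hκ hf hu (Finset.mem_compl.1 hj)
  have hσ : κ / minorBound N κ = 2 * splitLevel N κ := by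
    unfold splitLevel
    ring
  linarith

lemma exists_pos_le_sum_of_forall_not_splitsAt (N : ℕ) {κ p : ℝ} (hκ : 0 < κ) (hp : 0 < p) :
    ∃ c : ℝ, 0 < c ∧ ∀ (A : Matrix (Fin N) (Fin N) ℝ) (m u : Fin N → ℝ), IsAdmissible κ A m →
      (∀ i, 0 ≤ u i) → (∀ I, ¬ SplitsAt (splitLevel N κ) (fComp A m u) I) →
        c ≤ ∑ i, u i * |fComp A m u i| ^ p := by
  set σ := splitLevel N κ
  let L := N * (1 / κ) * inverseBound N κ
  let η := σ / (L + 3)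
  have hσ : 0 < σ := splitLevel_pos N hκ
  have hL : 0 ≤ L := by
    have := inverseBound_nonneg N hκ
    positivity
  have hη : 0 < η := by positivity
  have hη_mul : η * (L + 3) = σ := div_mul_cancel₀ σ (by positivity)
  refine ⟨η * η ^ p, by positivity, fun A m u h hu hsplit => ?_⟩
  contrapose! hsplit
  refine ⟨({i | η ≤ u i} : Finset (Fin N))ᶜ, h.splitsAt_compl hκ (η := η) (by nlinarith)
    (by change L * η < σ; nlinarith) (fun i hi => ?_) (fun i hi => ?_)⟩
  · have hfi := (mul_abs_rpow_le_sum hu p (f := fComp A m u)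
      (by simpa using hi : η ≤ u i)).trans_lt hsplit
    exact ((Real.rpow_lt_rpow_iff (abs_nonneg _) hη.le hp).1 (lt_of_mul_lt_mul_left hfi hη.le)).le
  · rw [abs_of_nonneg (hu i)]
    exact (by simpa using hi : u i < η).le

/-! ### Integral estimates -/

section Integral

variable {X : Type*} [MeasurableSpace X] {μ : Measure X}

lemma mul_measure_le_lintegral {B : Set X} (hB : NullMeasurableSet B μ) {c : ℝ≥0∞}
    {H : X → ℝ≥0∞} (hH : ∀ᵐ x ∂μ, x ∈ B → c ≤ H x) : c * μ B ≤ ∫⁻ x, H x ∂μ := by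
  rw [← lintegral_indicator_const₀ hB]
  refine lintegral_mono_ae (hH.mono fun x hx => ?_)
  exact Set.indicator_apply_le' hx fun _ => zero_le

lemma lintegral_le_two_mul_of_le_mul_one_add {G H : X → ℝ≥0∞} {C δ : ℝ≥0∞} (hC : C ≠ ⊤)
    (hGH : ∀ᵐ x ∂μ, G x ≤ C * (1 + H x)) (hG : ∫⁻ x, G x ∂μ ≠ ⊤)
    (hH : ∫⁻ x, H x ∂μ ≤ δ * ∫⁻ x, G x ∂μ) (hδ : C * δ ≤ 2⁻¹) :
    ∫⁻ x, G x ∂μ ≤ 2 * (C * μ Set.univ) := by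
  set I := ∫⁻ x, G x ∂μ
  have habsorb : I / 2 + I / 2 ≤ C * μ Set.univ + I / 2 :=
    calc I / 2 + I / 2 = I := ENNReal.add_halves I
      _ ≤ ∫⁻ x, C * (1 + H x) ∂μ := lintegral_mono_ae hGH
      _ = C * μ Set.univ + C * ∫⁻ x, H x ∂μ := by
          rw [lintegral_const_mul' _ _ hC, lintegral_add_left measurable_const, lintegral_one,
            mul_add]
      _ ≤ C * μ Set.univ + C * (δ * I) := by gcongr
      _ ≤ C * μ Set.univ + I / 2 := by
          rw [← mul_assoc, ENNReal.div_eq_inv_mul]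
          gcongr
  have hhalf : I / 2 ≤ C * μ Set.univ :=
    ENNReal.le_of_add_le_add_right (ENNReal.div_ne_top hG two_ne_zero) habsorb
  rwa [ENNReal.div_le_iff two_ne_zero ENNReal.ofNat_ne_top, mul_comm] at hhalf

variable {ι : Type*} {l : Filter ι}

lemma tendsto_measure_zero_of_tendsto_lintegral_zero {B : ι → Set X} {H : ι → X → ℝ≥0∞}
    {c : ℝ≥0∞} (hc : c ≠ 0) (hc' : c ≠ ⊤) (hB : ∀ n, NullMeasurableSet (B n) μ)
    (hcH : ∀ n, ∀ᵐ x ∂μ, x ∈ B n → c ≤ H n x)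
    (hH : Tendsto (fun n => ∫⁻ x, H n x ∂μ) l (𝓝 0)) : Tendsto (fun n => μ (B n)) l (𝓝 0) := by
  have hlim : Tendsto (fun n => (∫⁻ x, H n x ∂μ) / c) l (𝓝 0) := by
    simpa only [ENNReal.zero_div] using ENNReal.Tendsto.div_const hH (Or.inr hc)
  refine tendsto_of_tendsto_of_tendsto_of_le_of_le tendsto_const_nhds hlim
    (fun _ => zero_le) fun n => ?_
  change μ (B n) ≤ (∫⁻ x, H n x ∂μ) / c
  rw [ENNReal.le_div_iff_mul_le (Or.inl hc) (Or.inl hc'), mul_comm]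
  exact mul_measure_le_lintegral (hB n) (hcH n)

variable [IsFiniteMeasure μ]

lemma tendsto_lintegral_zero_of_le_mul {G H : ι → X → ℝ≥0∞} {C : ℝ≥0∞} {δ : ι → ℝ≥0∞}
    (hC : C ≠ ⊤) (hδ : Tendsto δ l (𝓝 0)) (hGH : ∀ n, ∀ᵐ x ∂μ, G n x ≤ C * (1 + H n x))
    (hG : ∀ n, ∫⁻ x, G n x ∂μ ≠ ⊤) (hH : ∀ n, ∫⁻ x, H n x ∂μ ≤ δ n * ∫⁻ x, G n x ∂μ) :
    Tendsto (fun n => ∫⁻ x, H n x ∂μ) l (𝓝 0) := by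
  have hsmall : ∀ᶠ n in l, C * δ n ≤ 2⁻¹ := by
    have hCδ : Tendsto (fun n => C * δ n) l (𝓝 0) := by
      simpa only [mul_zero] using ENNReal.Tendsto.const_mul hδ (Or.inr hC)
    exact hCδ.eventually_le_const (by norm_num)
  have hlim : Tendsto (fun n => δ n * (2 * (C * μ Set.univ))) l (𝓝 0) := by
    have hfin : 2 * (C * μ Set.univ) ≠ ⊤ := by finiteness
    simpa only [zero_mul] using ENNReal.Tendsto.mul_const hδ (Or.inr hfin)
  refine tendsto_of_tendsto_of_tendsto_of_le_of_le' tendsto_const_nhds hlim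
    (Eventually.of_forall fun _ => zero_le) (hsmall.mono fun n hn => (hH n).trans ?_)
  gcongr
  exact lintegral_le_two_mul_of_le_mul_one_add hC (hGH n) (hG n) (hH n) hn

lemma tendsto_sum_measure_of_tendsto_measure_compl_iUnion {β : Type*} [Fintype β]
    {S : ι → β → Set X} (hS : ∀ n k, NullMeasurableSet (S n k) μ)
    (hdisj : ∀ n, Pairwise (Function.onFun Disjoint (S n)))
    (hcompl : Tendsto (fun n => μ (⋃ k, S n k)ᶜ) l (𝓝 0)) :
    Tendsto (fun n => ∑ k, μ (S n k)) l (𝓝 (μ Set.univ)) := by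
  have hsum (n : ι) : ∑ k, μ (S n k) = μ Set.univ - μ (⋃ k, S n k)ᶜ := by
    rw [← measure_compl₀ (NullMeasurableSet.iUnion (hS n)).compl (by finiteness), compl_compl,
      measure_iUnion₀ (fun i j hij => (hdisj n hij).aedisjoint) (hS n), tsum_fintype]
  simpa only [hsum, tsub_zero] using
    ENNReal.Tendsto.sub tendsto_const_nhds hcompl (Or.inl (measure_ne_top μ Set.univ))

end Integral

lemma fSeq_eq_fComp {d N : ℕ} (A : (Fin d → ℝ) → Matrix (Fin N) (Fin N) ℝ)
    (m u : (Fin d → ℝ) → Fin N → ℝ) (x : Fin d → ℝ) :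
    fSeq A m u x = fComp (A x) (m x) (u x) := rfl

lemma measurable_fSeq {d N : ℕ} {A : (Fin d → ℝ) → Matrix (Fin N) (Fin N) ℝ}
    {m u : (Fin d → ℝ) → Fin N → ℝ} (hA : ∀ i j, Measurable fun x => A x i j)
    (hm : ∀ i, Measurable fun x => m x i) (hu : ∀ i, Measurable fun x => u x i) :
    Measurable (fSeq A m u) :=
  measurable_pi_lambda _ fun i =>
    (hm i).sub (Finset.measurable_fun_sum _ fun j _ => (hA i j).mul (hu j))

theorem sum_measures_An_tendsto_measure_Omega_general (N : ℕ) {κ : ℝ} (hκ : 0 < κ) :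
    ∃ σ : ℝ, 0 < σ ∧ ∀ {p : ℝ}, 0 < p → ∀ {X : Type*} [MeasurableSpace X] (μ : Measure X)
      [IsFiniteMeasure μ] {ι : Type*} {l : Filter ι} {A : ι → X → Matrix (Fin N) (Fin N) ℝ}
      {m u : ι → X → Fin N → ℝ} {δ : ι → ℝ≥0∞},
      (∀ n, AEMeasurable (fun x => fComp (A n x) (m n x) (u n x)) μ) →
      (∀ n, ∀ᵐ x ∂μ, IsAdmissible κ (A n x) (m n x)) →
      (∀ n, ∀ᵐ x ∂μ, ∀ i, 0 ≤ u n x i) →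
      Tendsto δ l (𝓝 0) →
      (∀ n, ∫⁻ x, ENNReal.ofReal (∑ i, |fComp (A n x) (m n x) (u n x) i| ^ p) ∂μ ≠ ⊤) →
      (∀ n, ∫⁻ x, ENNReal.ofReal (∑ i, u n x i * |fComp (A n x) (m n x) (u n x) i| ^ p) ∂μ ≤
        δ n * ∫⁻ x, ENNReal.ofReal (∑ i, |fComp (A n x) (m n x) (u n x) i| ^ p) ∂μ) →
      Tendsto (fun n => ∑ I : Finset (Fin N),
        μ {x | SplitsAt σ (fComp (A n x) (m n x) (u n x)) I}) l (𝓝 (μ Set.univ)) := by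
  refine ⟨splitLevel N κ, splitLevel_pos N hκ, ?_⟩
  intro p hp X _ μ _ ι l A m u δ hf hA hu hδ hfin hint
  obtain ⟨C, hC, hgC⟩ := exists_sum_abs_rpow_le N hκ hp
  obtain ⟨c, hc, hch⟩ := exists_pos_le_sum_of_forall_not_splitsAt N hκ hp
  have hmeas (n : ι) (I : Finset (Fin N)) : NullMeasurableSet
      {x | SplitsAt (splitLevel N κ) (fComp (A n x) (m n x) (u n x)) I} μ :=
    (hf n).nullMeasurableSet_preimage (measurableSet_splitsAt _ I)
  have hh0 := tendsto_lintegral_zero_of_le_mul ENNReal.ofReal_ne_top hδ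
    (C := ENNReal.ofReal C) (fun n => by
      filter_upwards [hA n, hu n] with x hAx hux
      rw [← ENNReal.ofReal_one, ← ENNReal.ofReal_add zero_le_one
        (Finset.sum_nonneg fun i _ => mul_nonneg (hux i) (by positivity)), ← ENNReal.ofReal_mul hC]
      exact ENNReal.ofReal_le_ofReal (hgC _ _ _ hAx hux)) hfin hint
  refine tendsto_sum_measure_of_tendsto_measure_compl_iUnion hmeas
    (fun n I I' hne => Set.disjoint_left.2 fun x hI hI' => hne (SplitsAt.unique hI hI')) ?_
  refine tendsto_measure_zero_of_tendsto_lintegral_zero (ENNReal.ofReal_pos.2 hc).ne'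
    ENNReal.ofReal_ne_top (fun n => (NullMeasurableSet.iUnion (hmeas n)).compl) (fun n => ?_) hh0
  filter_upwards [hA n, hu n] with x hAx hux hx
  exact ENNReal.ofReal_le_ofReal (hch _ _ _ hAx hux (by simpa using hx))

/-- There is `σ > 0` depending only on `N`, `p`, `κ` such that in the sequence setup,
with `A_n(I) = (⋂_{i ∈ I} {f_{in} > σ}) ∩ (⋂_{j ∉ I} {|f_{jn}| < σ/2})`, one has
`Σ_{I ⊆ {1,…,N}} |A_n(I)| → |Ω|` as `n → ∞`. -/
theorem sum_measures_An_tendsto_measure_Omega {N : ℕ} (hN : 0 < N)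
    (p κ : ℝ) (hp : 1 ≤ p) (hκ : 0 < κ) :
    ∃ σ : ℝ, 0 < σ ∧
      ∀ (d : ℕ) (Ω : Set (Fin d → ℝ)), IsOpen Ω → Bornology.IsBounded Ω →
      ∀ (A : ℕ → (Fin d → ℝ) → Matrix (Fin N) (Fin N) ℝ)
        (m : ℕ → (Fin d → ℝ) → Fin N → ℝ)
        (u : ℕ → (Fin d → ℝ) → Fin N → ℝ),
        (∀ n i j, Measurable fun x => A n x i j) →
        (∀ n i, Measurable fun x => m n x i) →
        (∀ n i, Measurable fun x => u n x i) →
        (∀ n, ∀ x ∈ Ω, IsAdmissible κ (A n x) (m n x)) →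
        (∀ n, ∀ x ∈ Ω, ∀ i, 0 ≤ u n x i) →
      ∀ eps : ℕ → ℝ, (∀ n, eps n ∈ Set.Ioo (0 : ℝ) 1) →
        Tendsto eps atTop (nhds 0) →
        (∀ n, ∫⁻ x in Ω, ENNReal.ofReal (gSeq (A n) (m n) (u n) p x) < ⊤) →
        (∀ n,
          ∫⁻ x in Ω, ENNReal.ofReal (∑ i, u n x i * |fSeq (A n) (m n) (u n) x i| ^ p) ≤
            ENNReal.ofReal (eps n ^ 2) *
              ∫⁻ x in Ω, ENNReal.ofReal (gSeq (A n) (m n) (u n) p x)) →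
        Tendsto (fun n => ∑ I : Finset (Fin N),
            volume ((⋂ i ∈ I, {x ∈ Ω | σ < fSeq (A n) (m n) (u n) x i}) ∩
              ⋂ j ∈ Iᶜ, {x ∈ Ω | |fSeq (A n) (m n) (u n) x j| < σ / 2}))
          atTop (nhds (volume Ω)) := by
  obtain ⟨σ, hσ, hlim⟩ := sum_measures_An_tendsto_measure_Omega_general N hκ
  refine ⟨σ, hσ, fun d Ω hΩ hb A m u hA hm hu hadm hu0 eps _ heps hfin hint => ?_⟩
  have : Nonempty (Fin N) := ⟨⟨0, hN⟩⟩
  have : IsFiniteMeasure (volume.restrict Ω) := isFiniteMeasure_restrict.2 hb.measure_lt_top.ne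
  have heps_sq : Tendsto (fun n => ENNReal.ofReal (eps n ^ 2)) atTop (𝓝 0) := by
    simpa using ENNReal.tendsto_ofReal (heps.pow 2)
  simpa only [iInter_inter_iInter_eq_splitsAt, Measure.restrict_apply' hΩ.measurableSet,
    Set.univ_inter, fSeq_eq_fComp] using hlim (zero_lt_one.trans_le hp) (volume.restrict Ω)
      (fun n => (measurable_fSeq (hA n) (hm n) (hu n)).aemeasurable)
      (fun n => ae_restrict_of_forall_mem hΩ.measurableSet (hadm n))
      (fun n => ae_restrict_of_forall_mem hΩ.measurableSet (hu0 n)) heps_sq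
      (fun n => (hfin n).ne) hint
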